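/- Let A be a polynomially cyclic algebra over the finite field K = F_q with Gal(A/K) = ⟨ν⟩ of order n, let ρ_n be a primitive n-th root of unity over K, let χ: Gal(A/K) → K[ρ_n]^* be a multiplicative character, and suppose the q-power Frobenius map x ↦ x^q on A is an element φ_q of Gal(A/K). Then for every α ∈ A, the Lagrange resolvent satisfies (χ, α)^q = χ(φ_q)^{-q} · (χ^q, α), where the q-th power on the left is taken in A_{ρ_n} with the q-power map also applied to K[ρ_n], and χ^q denotes the character σ ↦ χ(σ)^q. -/

import Mathlib

open Polynomial

/-- `iterComp C m` is the `m`-fold composition `C^{(m)}` of `C` with itself,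
with `C^{(0)} = X`. -/
noncomputable def iterComp {K : Type*} [CommRing K] (C : K[X]) : ℕ → K[X]
  | 0 => X
  | m + 1 => (iterComp C m).comp C

/-- `f` is a cyclic polynomial with cyclicity polynomial `C`:
`f(C(X)) ≡ 0 mod f(X)`, `C^{(n)}(X) - X ≡ 0 mod f(X)` where `n = deg f`, and
`gcd(C^{(m)}(X) - X, f(X)) = 1` for `1 ≤ m < n`. -/
def IsCyclicPolyWith {K : Type*} [Field K] (f C : K[X]) : Prop :=
  f ∣ f.comp C ∧ f ∣ (iterComp C f.natDegree - X) ∧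
    ∀ m : ℕ, 1 ≤ m → m < f.natDegree → IsCoprime (iterComp C m - X) f

/-!
The `q`-power map is additive on `L ⊗[K] A`, so `(χ, a)^q = (χ^q, a^q) = (χ^q, φ_q(a))`; reindexing
the sum over the group by `g ↦ g φ_q` then pulls out the factor `χ(φ_q)^{-q}`.
-/

theorem sum_zpowers_eq_sum_range_pow_succ {G M : Type*} [Group G] [AddCommMonoid M] {x : G}
    [Fintype (Subgroup.zpowers x)] (hx : IsOfFinOrder x) (F : Subgroup.zpowers x → M) :
    ∑ g, F g =
      ∑ i ∈ Finset.range (orderOf x), F (⟨x, Subgroup.mem_zpowers x⟩ ^ (i + 1)) := by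
  set gen : Subgroup.zpowers x := ⟨x, Subgroup.mem_zpowers x⟩
  calc
    ∑ g, F g = ∑ g, F (g * gen) := (Equiv.sum_comp (Equiv.mulRight gen) F).symm
    _ = ∑ i : Fin (orderOf x), F (gen ^ (i : ℕ) * gen) :=
      (Equiv.sum_comp (finEquivZPowers hx) fun g => F (g * gen)).symm
    _ = ∑ i ∈ Finset.range (orderOf x), F (gen ^ (i + 1)) := by
      simp only [pow_succ]
      exact Fin.sum_univ_eq_sum_range (fun i => F (gen ^ i * gen)) _

section LagrangeResolvent

open scoped TensorProduct

variable {G L A : Type*} [Group G] [Fintype G]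

/-- The Lagrange resolvent `(χ, a) = ∑ g, χ(g) · g(a)` of a character `χ` of a finite group `G`
acting on `A`. The values of `χ` lie in an extension `L` of `K`, so the resolvent lives in the
scalar extension `L ⊗[K] A`. Summing over `G` itself, rather than over the powers of a generator,
makes its behaviour under translation a plain reindexing. -/
noncomputable def lagrangeResolvent (K : Type*) [CommSemiring K] [Semiring L] [Algebra K L]
    [AddCommMonoid A] [Module K A] [SMul G A] (χ : G →* Lˣ) (a : A) : L ⊗[K] A :=
  ∑ g : G, (χ g : L) ⊗ₜ[K] (g • a)

theorem lagrangeResolvent_smul (K : Type*) [CommSemiring K] [CommSemiring L] [Algebra K L]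
    [AddCommMonoid A] [Module K A] [MulAction G A] (χ : G →* Lˣ) (h : G) (a : A) :
    lagrangeResolvent K χ (h • a) = (χ h)⁻¹ • lagrangeResolvent K χ a := by
  rw [eq_inv_smul_iff]
  calc
    χ h • lagrangeResolvent K χ (h • a)
      = ∑ g : G, (χ (g * h) : L) ⊗ₜ[K] ((g * h) • a) := by
        simp only [lagrangeResolvent, Finset.smul_sum, Units.smul_def, TensorProduct.smul_tmul',
          smul_eq_mul, map_mul, Units.val_mul, mul_smul, mul_comm]
    _ = lagrangeResolvent K χ a :=
      Equiv.sum_comp (Equiv.mulRight h) fun g => (χ g : L) ⊗ₜ[K] (g • a)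

theorem lagrangeResolvent_zpowers {K L A : Type*} [CommSemiring K] [Semiring L] [Algebra K L]
    [Semiring A] [Algebra K A] {ν : A ≃ₐ[K] A} [Fintype (Subgroup.zpowers ν)]
    (hν : IsOfFinOrder ν) (χ : Subgroup.zpowers ν →* Lˣ) (a : A) :
    lagrangeResolvent K χ a =
      ∑ i ∈ Finset.range (orderOf ν),
        ((χ ⟨ν, Subgroup.mem_zpowers ν⟩ : L) ^ (i + 1)) ⊗ₜ[K] ((ν ^ (i + 1)) a) := by
  rw [lagrangeResolvent, sum_zpowers_eq_sum_range_pow_succ hν]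
  simp only [map_pow, Units.val_pow_eq_pow_val, Subgroup.smul_def, Subgroup.coe_pow,
    AlgEquiv.smul_def]

variable (K : Type*) [Field K] [Fintype K]
  [CommRing L] [Algebra K L] [CommRing A] [Algebra K A] [MulDistribMulAction G A]

theorem lagrangeResolvent_pow_card (χ : G →* Lˣ) (a : A) :
    lagrangeResolvent K χ a ^ Fintype.card K =
      lagrangeResolvent K (χ ^ Fintype.card K) (a ^ Fintype.card K) := by
  have pow_card_sum (F : G → L ⊗[K] A) :
      (∑ g, F g) ^ Fintype.card K = ∑ g, F g ^ Fintype.card K :=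
    map_sum (FiniteField.frobeniusAlgHom K (L ⊗[K] A)) F Finset.univ
  simp only [lagrangeResolvent, pow_card_sum, Algebra.TensorProduct.tmul_pow, smul_pow',
    MonoidHom.pow_apply, Units.val_pow_eq_pow_val]

theorem stmt_11_general (χ : G →* Lˣ) {φ : G} (hφ : ∀ x : A, φ • x = x ^ Fintype.card K) (a : A) :
    lagrangeResolvent K χ a ^ Fintype.card K =
      ((((χ φ)⁻¹ : Lˣ) : L) ^ Fintype.card K) ⊗ₜ[K] (1 : A) *
        lagrangeResolvent K (χ ^ Fintype.card K) a := by
  rw [lagrangeResolvent_pow_card, ← hφ, lagrangeResolvent_smul, MonoidHom.pow_apply, ← inv_pow,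
    Units.smul_def, Units.val_pow_eq_pow_val, Algebra.smul_def,
    Algebra.TensorProduct.algebraMap_apply, Algebra.algebraMap_self_apply]

end LagrangeResolvent

open scoped TensorProduct in
theorem stmt_11 {K L : Type*} [Field K] [Fintype K] [Field L] [Algebra K L]
    (f C : K[X]) (n : ℕ) (hn : f.natDegree = n) (hcyc : IsCyclicPolyWith f C)
    (ν : AdjoinRoot f ≃ₐ[K] AdjoinRoot f)
    (hν : ν (AdjoinRoot.root f) = aeval (AdjoinRoot.root f) C)
    (hord : orderOf ν = n)
    (ρ : L) (hρ : IsPrimitiveRoot ρ n) (hL : Algebra.adjoin K {ρ} = ⊤)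
    (χ : ↥(Subgroup.zpowers ν) →* Lˣ)
    (φq : ↥(Subgroup.zpowers ν))
    (hφq : ∀ x : AdjoinRoot f,
      (φq : AdjoinRoot f ≃ₐ[K] AdjoinRoot f) x = x ^ Fintype.card K)
    (a : AdjoinRoot f) :
    (∑ i ∈ Finset.range n,
        (((χ ⟨ν, Subgroup.mem_zpowers ν⟩ : Lˣ) : L) ^ (i + 1)) ⊗ₜ[K] ((ν ^ (i + 1)) a))
      ^ Fintype.card K
    = (((((χ φq)⁻¹ : Lˣ) : L) ^ Fintype.card K) ⊗ₜ[K] (1 : AdjoinRoot f)) *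
      ∑ i ∈ Finset.range n,
        ((((χ ^ Fintype.card K) ⟨ν, Subgroup.mem_zpowers ν⟩ : Lˣ) : L) ^ (i + 1)) ⊗ₜ[K]
          ((ν ^ (i + 1)) a) := by
  -- For `n = 0` the order of `ν` is infinite and both sums are empty.
  obtain rfl | hn_pos := n.eq_zero_or_pos
  · simp [Fintype.card_ne_zero]
  subst hord
  have hfin : IsOfFinOrder ν := orderOf_pos_iff.mp hn_pos
  let _ : Fintype (Subgroup.zpowers ν) := Fintype.ofEquiv _ (finEquivZPowers hfin)
  simpa only [lagrangeResolvent_zpowers hfin] using stmt_11_general K χ hφq a
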